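/- (UID Chase Similarity Theorem) Let I₀ be an instance, Σ_UID a transitively closed set of UIDs, and n ∈ ℕ. Let a and b be elements introduced in the chase Chase(I₀, Σ_UID) at positions R^p and S^q respectively. If a and b are both n-essential and both UIDs R^p ⊆ S^q and S^q ⊆ R^p are in Σ_UID, then a ≃_n b in Chase(I₀, Σ_UID). -/

import Mathlib

namespace FQA

/-- A relational signature: a finite set of relation names, each with an arity `≥ 1`. -/
structure Sig where
  Rel : Type
  rel_fin : Finite Rel
  ar : Rel → ℕ
  ar_pos : ∀ R, 1 ≤ ar R

/-- The positions of a signature: pairs of a relation and an index into its arity. -/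
abbrev Sig.Pos (σ : Sig) : Type := Σ R : σ.Rel, Fin (σ.ar R)

/-- A fact `R(a₁, …, a_{ar R})` with elements from `α`. -/
abbrev Fact (σ : Sig) (α : Type) : Type := Σ R : σ.Rel, Fin (σ.ar R) → α

/-- An instance is a set of facts. -/
abbrev Inst (σ : Sig) (α : Type) : Type := Set (Fact σ α)

variable {σ : Sig} {α β : Type}

/-- Element `a` occurs at position `p` in some fact of the instance `I`. -/
def occursAt (I : Inst σ α) (p : σ.Pos) (a : α) : Prop :=
  ∃ t : Fin (σ.ar p.1) → α, (⟨p.1, t⟩ : Fact σ α) ∈ I ∧ t p.2 = a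

/-- The active domain of an instance: the elements occurring in some fact. -/
def activeDom (I : Inst σ α) : Set α :=
  {a | ∃ F : Fact σ α, F ∈ I ∧ ∃ i, F.2 i = a}

/-- A unary inclusion dependency `src ⊆ dst` (nontrivial: `src ≠ dst`). -/
structure UID (σ : Sig) where
  src : σ.Pos
  dst : σ.Pos
  ne : src ≠ dst

/-- The reverse of a UID. -/
def UID.rev (τ : UID σ) : UID σ := ⟨τ.dst, τ.src, τ.ne.symm⟩

/-- An instance satisfies a UID if every element occurring at `src` also occurs at `dst`. -/
def satUID (I : Inst σ α) (τ : UID σ) : Prop :=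
  ∀ a, occursAt I τ.src a → occursAt I τ.dst a

/-- A unary functional dependency `R^src → R^dst` (nontrivial: `src ≠ dst`). -/
structure UFD (σ : Sig) where
  rel : σ.Rel
  src : Fin (σ.ar rel)
  dst : Fin (σ.ar rel)
  ne : src ≠ dst

/-- The reverse of a UFD. -/
def UFD.rev (φ : UFD σ) : UFD σ := ⟨φ.rel, φ.dst, φ.src, φ.ne.symm⟩

/-- The source position of a UFD, as a position of the signature. -/
def UFD.posSrc (φ : UFD σ) : σ.Pos := ⟨φ.rel, φ.src⟩

/-- The target position of a UFD, as a position of the signature. -/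
def UFD.posDst (φ : UFD σ) : σ.Pos := ⟨φ.rel, φ.dst⟩

/-- An instance satisfies a UFD if any two facts of `rel` agreeing at `src` agree at `dst`. -/
def satUFD (I : Inst σ α) (φ : UFD σ) : Prop :=
  ∀ t u : Fin (σ.ar φ.rel) → α,
    (⟨φ.rel, t⟩ : Fact σ α) ∈ I → (⟨φ.rel, u⟩ : Fact σ α) ∈ I →
    t φ.src = u φ.src → t φ.dst = u φ.dst

/-- A set of UIDs is transitively closed. -/
def TransClosedUID (Su : Set (UID σ)) : Prop :=
  ∀ τ ∈ Su, ∀ τ' ∈ Su, τ.dst = τ'.src →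
    ∀ h : τ.src ≠ τ'.dst, (⟨τ.src, τ'.dst, h⟩ : UID σ) ∈ Su

/-- A set of UFDs is closed under UFD transitivity. -/
def TransClosedUFD (Sf : Set (UFD σ)) : Prop :=
  ∀ (R : σ.Rel) (i j k : Fin (σ.ar R)) (h1 : i ≠ j) (h2 : j ≠ k) (h3 : i ≠ k),
    (⟨R, i, j, h1⟩ : UFD σ) ∈ Sf → (⟨R, j, k, h2⟩ : UFD σ) ∈ Sf →
    (⟨R, i, k, h3⟩ : UFD σ) ∈ Sf

/-- Elements of the UID chase: base elements of the initial instance, and nulls.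
The null `CEl.null x p r` is the fresh element placed at position `r` of the fact
created to satisfy the requirement that `x` appear at position `p`. -/
inductive CEl (σ : Sig) : Type
  | base : ℕ → CEl σ
  | null : CEl σ → σ.Pos → σ.Pos → CEl σ

/-- `Created I₀ Su x p` holds when the UID chase of `I₀` by the (transitively closed)
UIDs `Su` creates a new fact whose exported element is `x`, placed at position `p`.
The first round is performed as a core-chase round: for each element of `I₀` and each
position where it wants to appear, a single new fact is created; afterwards, each
null introduced at a position `r` spawns one new fact for each UID of `Su` with
source `r`. -/
inductive Created (I₀ : Inst σ ℕ) (Su : Set (UID σ)) : CEl σ → σ.Pos → Prop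
  | root (a : ℕ) (p : σ.Pos) :
      (∃ τ ∈ Su, τ.dst = p ∧ occursAt I₀ τ.src a) →
      ¬ occursAt I₀ p a →
      Created I₀ Su (CEl.base a) p
  | step (x : CEl σ) (p r q : σ.Pos) :
      Created I₀ Su x p → r.1 = p.1 → r ≠ p →
      (∃ τ ∈ Su, τ.src = r ∧ τ.dst = q) →
      Created I₀ Su (CEl.null x p r) q

/-- The UID chase of `I₀` by `Su`: the facts of `I₀` (over base elements) together
with, for each requirement `(x, p)` that is created, the fact of relation `p.1` with
`x` at position `p` and fresh nulls at all other positions. -/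
def chaseInst (I₀ : Inst σ ℕ) (Su : Set (UID σ)) : Inst σ (CEl σ) :=
  {F | (∃ F₀ : Fact σ ℕ, F₀ ∈ I₀ ∧ F = ⟨F₀.1, fun i => CEl.base (F₀.2 i)⟩) ∨
       (∃ (x : CEl σ) (p : σ.Pos), Created I₀ Su x p ∧
          F = ⟨p.1, fun i => if i = p.2 then x else CEl.null x p ⟨p.1, i⟩⟩)}

/-- `a` is introduced at position `r` in the chase: `a` is a null placed at a
non-exported position `r` of the fact created for some requirement `(x, p)`. -/
def IntroducedAt (I₀ : Inst σ ℕ) (Su : Set (UID σ)) (a : CEl σ) (r : σ.Pos) : Prop :=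
  ∃ (x : CEl σ) (p : σ.Pos), Created I₀ Su x p ∧ r.1 = p.1 ∧ r ≠ p ∧ a = CEl.null x p r

/-- Some UID of `Su` that was applied to create the fact for requirement `(x, p)`
has its reverse in `Su`. -/
def usedUIDRev (I₀ : Inst σ ℕ) (Su : Set (UID σ)) : CEl σ → σ.Pos → Prop
  | CEl.base a, p =>
      ∃ τ ∈ Su, τ.dst = p ∧ occursAt I₀ τ.src a ∧ ¬ occursAt I₀ p a ∧ τ.rev ∈ Su
  | CEl.null _ _ r, p => ∃ τ ∈ Su, τ.src = r ∧ τ.dst = p ∧ τ.rev ∈ Su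

/-- A chase element is `n`-essential: the last `n` UIDs used to create it (the UID
applied to create the fact where it was introduced, then the UID applied to create
the fact where the exported element of that fact was introduced, and so on) are
reversible in `Su`. -/
def essential (I₀ : Inst σ ℕ) (Su : Set (UID σ)) : ℕ → CEl σ → Prop
  | 0, _ => True
  | _ + 1, CEl.base _ => False
  | n + 1, CEl.null x p _ => usedUIDRev I₀ Su x p ∧ essential I₀ Su n x

/-- The bounded simulation relation `(I, a) ≤_n (J, b)`: it always holds for `n = 0`,
and for `n + 1` it holds iff every fact of `I` containing `a` at some position has a
witnessing fact of `J` containing `b` at that position whose elements are pairwise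
`≤_n`-related to those of the original fact. -/
def bsim (I : Inst σ α) (J : Inst σ β) : ℕ → α → β → Prop
  | 0, _, _ => True
  | n + 1, a, b =>
      ∀ (R : σ.Rel) (t : Fin (σ.ar R) → α) (p : Fin (σ.ar R)),
        (⟨R, t⟩ : Fact σ α) ∈ I → t p = a →
        ∃ u : Fin (σ.ar R) → β, (⟨R, u⟩ : Fact σ β) ∈ J ∧ u p = b ∧
          ∀ q : Fin (σ.ar R), bsim I J n (t q) (u q)

/-!
A null introduced at position `r` occurs at exactly the positions `s` with `r ⊆ s` (or `r = s`),
once at each of them. To simulate an essential `a` by an essential `b` introduced at an equivalent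
position, match the fact having `a` at `s` with the fact having `b` at `s`, and distinguish two
cases.

* If `s` is equivalent to the positions where `a` and `b` were introduced, then whether these facts
  introduce or export `a` and `b`, the exported element of each was exported along a reversible
  UID. All their elements are therefore again essential for the next lower depth, at equivalent
  positions, and induction on the depth applies.
* Otherwise both facts were created by exporting `a` and `b` to `s`. The parts of the chase below
  them have the same shape, so the similarity of `a` and `b` at the next lower depth extends to
  their descendants.
-/

section Positions

/-- The relation on positions given by membership in `Su`: the UID `p ⊆ q` belongs to `Su`. -/
def HasUID (Su : Set (UID σ)) (p q : σ.Pos) : Prop :=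
  ∃ τ ∈ Su, τ.src = p ∧ τ.dst = q

/-- The reflexive closure of `HasUID`, which restores the trivial dependencies `p ⊆ p` that the
type `UID` excludes. It is a preorder when `Su` is transitively closed, and its symmetric part
`AntisymmRel (UIDLe Su)` relates the positions linked by a UID and its reverse. -/
def UIDLe (Su : Set (UID σ)) : σ.Pos → σ.Pos → Prop :=
  Relation.ReflGen (HasUID Su)

variable {Su : Set (UID σ)} {p q r : σ.Pos}

theorem uidLe_iff : UIDLe Su p q ↔ q = p ∨ HasUID Su p q :=
  Relation.reflGen_iff _ _ _

theorem UIDLe.of_mem {hpq : p ≠ q} (h : (⟨p, q, hpq⟩ : UID σ) ∈ Su) : UIDLe Su p q :=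
  .single ⟨_, h, rfl, rfl⟩

theorem HasUID.ne (h : HasUID Su p q) : p ≠ q := by
  obtain ⟨τ, -, rfl, rfl⟩ := h
  exact τ.ne

theorem UIDLe.trans (htc : TransClosedUID Su) (hpq : UIDLe Su p q) (hqr : UIDLe Su q r) :
    UIDLe Su p r := by
  rcases hpq with _ | ⟨τ, hτ, rfl, rfl⟩
  · exact hqr
  rcases hqr with _ | ⟨τ', hτ', hsrc, rfl⟩
  · exact .single ⟨τ, hτ, rfl, rfl⟩
  by_cases hne : τ.src = τ'.dst
  · rw [hne]
    exact .refl
  · exact .of_mem (htc τ hτ τ' hτ' hsrc.symm hne)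

theorem antisymmRel_uidLe_trans (htc : TransClosedUID Su) (hpq : AntisymmRel (UIDLe Su) p q)
    (hqr : AntisymmRel (UIDLe Su) q r) : AntisymmRel (UIDLe Su) p r :=
  ⟨hpq.1.trans htc hqr.1, hqr.2.trans htc hpq.2⟩

theorem usedUIDRev_null_iff {I : Inst σ ℕ} {x : CEl σ} :
    usedUIDRev I Su (CEl.null x p r) q ↔ HasUID Su r q ∧ HasUID Su q r := by
  constructor
  · rintro ⟨τ, hτ, rfl, rfl, hrev⟩
    exact ⟨⟨τ, hτ, rfl, rfl⟩, ⟨τ.rev, hrev, rfl, rfl⟩⟩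
  · rintro ⟨⟨τ, hτ, rfl, rfl⟩, ⟨⟨_, _, _⟩, hrev, rfl, rfl⟩⟩
    exact ⟨τ, hτ, rfl, rfl, hrev⟩

end Positions

section Chase

/-- The tuple of the chase fact that exports `x` to position `p`. -/
def createdTuple (x : CEl σ) (p : σ.Pos) : Fin (σ.ar p.1) → CEl σ :=
  fun i => if i = p.2 then x else CEl.null x p ⟨p.1, i⟩

variable {I : Inst σ ℕ} {Su : Set (UID σ)} {x a : CEl σ} {p r s : σ.Pos}

theorem createdTuple_self (x : CEl σ) (p : σ.Pos) : createdTuple x p p.2 = x :=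
  if_pos rfl

theorem createdTuple_of_ne {i : Fin (σ.ar p.1)} (hi : i ≠ p.2) :
    createdTuple x p i = CEl.null x p ⟨p.1, i⟩ :=
  if_neg hi

theorem Created.fact_mem (h : Created I Su x p) :
    (⟨p.1, createdTuple x p⟩ : Fact σ (CEl σ)) ∈ chaseInst I Su :=
  Or.inr ⟨x, p, h, rfl⟩

theorem Created.introducedAt (h : Created I Su x p) {i : Fin (σ.ar p.1)} (hi : i ≠ p.2) :
    IntroducedAt I Su (createdTuple x p i) ⟨p.1, i⟩ :=
  ⟨x, p, h, rfl, fun hp => hi (by cases p; cases hp; rfl), createdTuple_of_ne hi⟩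

theorem Created.introducedAt_of_null (h : Created I Su (CEl.null x p r) s) :
    IntroducedAt I Su (CEl.null x p r) r := by
  cases h with
  | step _ _ _ _ hc hrel hne _ => exact ⟨x, p, hc, hrel, hne, rfl⟩

theorem IntroducedAt.created_iff (h : IntroducedAt I Su a r) :
    Created I Su a s ↔ HasUID Su r s := by
  obtain ⟨x, p, hc, hrel, hne, rfl⟩ := h
  constructor
  · rintro (_ | ⟨_, _, _, _, _, _, _, hrs⟩)
    exact hrs
  · exact Created.step x p r s hc hrel hne

/-- This is the Unique Witness Property for nulls. -/
theorem fact_eq_of_null {R : σ.Rel} {t : Fin (σ.ar R) → CEl σ} {i : Fin (σ.ar R)}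
    (ht : (⟨R, t⟩ : Fact σ (CEl σ)) ∈ chaseInst I Su) (hi : t i = CEl.null x p r) :
    (r = ⟨R, i⟩ ∧ Created I Su x p ∧ (⟨R, t⟩ : Fact σ (CEl σ)) = ⟨p.1, createdTuple x p⟩) ∨
    (Created I Su (CEl.null x p r) ⟨R, i⟩ ∧ t = createdTuple (CEl.null x p r) ⟨R, i⟩) := by
  rcases ht with ⟨⟨_, _⟩, -, hF⟩ | ⟨y, ⟨R', j⟩, hc, hF⟩
  · cases hF
    cases hi
  · cases hF
    change createdTuple y ⟨R', j⟩ i = _ at hi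
    change Fin (σ.ar R') at i
    by_cases hij : i = j
    · subst hij
      obtain rfl : y = CEl.null x p r := (createdTuple_self y ⟨_, i⟩).symm.trans hi
      exact Or.inr ⟨hc, rfl⟩
    · rw [createdTuple_of_ne hij] at hi
      cases hi
      exact Or.inl ⟨rfl, hc, rfl⟩

theorem IntroducedAt.eq_createdTuple {R : σ.Rel} {t : Fin (σ.ar R) → CEl σ} {i : Fin (σ.ar R)}
    (h : IntroducedAt I Su a r) (hc : Created I Su a ⟨R, i⟩)
    (ht : (⟨R, t⟩ : Fact σ (CEl σ)) ∈ chaseInst I Su) (hi : t i = a) :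
    t = createdTuple a ⟨R, i⟩ := by
  have hne : r ≠ ⟨R, i⟩ := (h.created_iff.1 hc).ne
  obtain ⟨x, p, -, -, -, rfl⟩ := h
  exact ((fact_eq_of_null ht hi).resolve_left fun hparent => hne hparent.1).2

theorem IntroducedAt.occursAt_chaseInst_iff (h : IntroducedAt I Su a r) :
    occursAt (chaseInst I Su) s a ↔ UIDLe Su r s := by
  rw [uidLe_iff, ← h.created_iff]
  constructor
  · rintro ⟨t, ht, hts⟩
    obtain ⟨x, p, -, -, -, rfl⟩ := h
    rcases fact_eq_of_null ht hts with ⟨rfl, -⟩ | ⟨hc, -⟩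
    · exact Or.inl rfl
    · exact Or.inr hc
  · rintro (rfl | hc)
    · obtain ⟨x, ⟨R, j⟩, hc, hrel, hne, rfl⟩ := h
      obtain ⟨R', i⟩ := s
      cases hrel
      exact ⟨_, hc.fact_mem, createdTuple_of_ne fun hij => hne (congrArg _ hij)⟩
    · exact ⟨_, hc.fact_mem, createdTuple_self a s⟩

end Chase

section Essential

/-- `a` is an `n`-essential null introduced at a position equivalent to `s`. Nothing is asked
when `n = 0`, because the exported element of a chase fact may then be an element of `I`, which
is introduced nowhere. -/
def EssentialAt (I : Inst σ ℕ) (Su : Set (UID σ)) : ℕ → CEl σ → σ.Pos → Prop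
  | 0, _, _ => True
  | n + 1, a, s =>
      essential I Su (n + 1) a ∧ ∃ r, IntroducedAt I Su a r ∧ AntisymmRel (UIDLe Su) r s

variable {I : Inst σ ℕ} {Su : Set (UID σ)}

theorem essential_of_succ : ∀ {n : ℕ} {a : CEl σ}, essential I Su (n + 1) a → essential I Su n a
  | 0, _, _ => trivial
  | _ + 1, CEl.base _, h => h.elim
  | _ + 1, CEl.null _ _ _, h => ⟨h.1, essential_of_succ h.2⟩

theorem IntroducedAt.essentialAt {n : ℕ} {a : CEl σ} {r s : σ.Pos}
    (h : IntroducedAt I Su a r) (ha : essential I Su n a) (hrs : AntisymmRel (UIDLe Su) r s) :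
    EssentialAt I Su n a s := by
  cases n with
  | zero => trivial
  | succ n => exact ⟨ha, r, h, hrs⟩

theorem EssentialAt.of_succ {n : ℕ} {a : CEl σ} {s : σ.Pos} (h : EssentialAt I Su (n + 1) a s) :
    EssentialAt I Su n a s := by
  obtain ⟨ha, r, hr, hrs⟩ := h
  exact hr.essentialAt (essential_of_succ ha) hrs

theorem Created.essentialAt_createdTuple {n : ℕ} {x : CEl σ} {p : σ.Pos} (hc : Created I Su x p)
    (hrev : usedUIDRev I Su x p) (hx : essential I Su n x) (i : Fin (σ.ar p.1)) :
    EssentialAt I Su n (createdTuple x p i) ⟨p.1, i⟩ := by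
  by_cases hi : i = p.2
  · subst hi
    rw [createdTuple_self]
    cases n with
    | zero => trivial
    | succ n =>
      cases x with
      | base _ => exact hx.elim
      | null y p' r =>
        obtain ⟨hrp, hpr⟩ := usedUIDRev_null_iff.1 hrev
        exact hc.introducedAt_of_null.essentialAt hx ⟨.single hrp, .single hpr⟩
  · refine (hc.introducedAt hi).essentialAt (essential_of_succ ?_) ⟨.refl, .refl⟩
    rw [createdTuple_of_ne hi]
    exact ⟨hrev, hx⟩

theorem essentialAt_of_uidLe {n : ℕ} {a : CEl σ} {r : σ.Pos} {R : σ.Rel}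
    {t : Fin (σ.ar R) → CEl σ} {i : Fin (σ.ar R)} (hr : IntroducedAt I Su a r)
    (ha : essential I Su (n + 1) a) (ht : (⟨R, t⟩ : Fact σ (CEl σ)) ∈ chaseInst I Su)
    (hi : t i = a) (hle : UIDLe Su ⟨R, i⟩ r) (k : Fin (σ.ar R)) :
    EssentialAt I Su n (t k) ⟨R, k⟩ := by
  have hasUID_of_created : Created I Su a ⟨R, i⟩ → HasUID Su r ⟨R, i⟩ := hr.created_iff.1
  obtain ⟨x, p, -, -, -, rfl⟩ := hr
  rcases fact_eq_of_null ht hi with ⟨-, hc, hF⟩ | ⟨hc, rfl⟩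
  · cases hF
    exact hc.essentialAt_createdTuple ha.1 ha.2 k
  · have hri := hasUID_of_created hc
    have hir := (uidLe_iff.1 hle).resolve_left hri.ne
    exact hc.essentialAt_createdTuple (usedUIDRev_null_iff.2 ⟨hri, hir⟩) (essential_of_succ ha) k

end Essential

section Similarity

theorem bsim_of_succ {I : Inst σ α} {J : Inst σ β} :
    ∀ {n : ℕ} {a : α} {b : β}, bsim I J (n + 1) a b → bsim I J n a b
  | 0, _, _, _ => trivial
  | _ + 1, _, _, h => fun R t p ht hp => by
    obtain ⟨u, hu, hup, htu⟩ := h R t p ht hp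
    exact ⟨u, hu, hup, fun q => bsim_of_succ (htu q)⟩

variable {I J : Inst σ ℕ} {Su : Set (UID σ)}

theorem bsim_createdTuple {n : ℕ} {x y : CEl σ} {s : σ.Pos} (hx : Created I Su x s)
    (hy : Created J Su y s) (hxy : bsim (chaseInst I Su) (chaseInst J Su) n x y)
    (i : Fin (σ.ar s.1)) :
    bsim (chaseInst I Su) (chaseInst J Su) n (createdTuple x s i) (createdTuple y s i) := by
  induction n generalizing x y s with
  | zero => trivial
  | succ n ih =>
    by_cases hi : i = s.2
    · subst hi
      simpa only [createdTuple_self] using hxy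
    have siblings := ih hx hy (bsim_of_succ hxy)
    intro R t j ht hj
    rcases fact_eq_of_null ht (hj.trans (createdTuple_of_ne hi)) with ⟨hpos, -, hF⟩ | ⟨hc, rfl⟩
    · cases hF
      cases hpos
      exact ⟨createdTuple y s, hy.fact_mem, rfl, siblings⟩
    · rw [← createdTuple_of_ne hi] at hc ⊢
      have hc' : Created J Su (createdTuple y s i) ⟨R, j⟩ :=
        (hy.introducedAt hi).created_iff.2 ((hx.introducedAt hi).created_iff.1 hc)
      exact ⟨_, hc'.fact_mem, createdTuple_self _ ⟨R, j⟩, ih hc hc' (siblings i)⟩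

theorem bsim_of_essentialAt (htc : TransClosedUID Su) {n : ℕ} {a b : CEl σ} {s : σ.Pos}
    (ha : EssentialAt I Su n a s) (hb : EssentialAt J Su n b s) :
    bsim (chaseInst I Su) (chaseInst J Su) n a b := by
  induction n generalizing a b s with
  | zero => trivial
  | succ n ih =>
    have hab := ih ha.of_succ hb.of_succ
    obtain ⟨hea, r, hr, hrs⟩ := ha
    obtain ⟨heb, r', hr', hrs'⟩ := hb
    have hrr' : AntisymmRel (UIDLe Su) r r' := antisymmRel_uidLe_trans htc hrs hrs'.symm
    intro R t i ht hi
    have hri : UIDLe Su r ⟨R, i⟩ := hr.occursAt_chaseInst_iff.1 ⟨t, ht, hi⟩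
    have hr'i : UIDLe Su r' ⟨R, i⟩ := hrr'.2.trans htc hri
    by_cases hir : UIDLe Su ⟨R, i⟩ r
    · obtain ⟨u, hu, hui⟩ := hr'.occursAt_chaseInst_iff.2 hr'i
      exact ⟨u, hu, hui, fun k => ih (essentialAt_of_uidLe hr hea ht hi hir k)
        (essentialAt_of_uidLe hr' heb hu hui (hir.trans htc hrr'.1) k)⟩
    · -- An irreversible UID leads to `⟨R, i⟩`, so both `a` and `b` are exported there.
      have hca : Created I Su a ⟨R, i⟩ := hr.created_iff.2 <|
        (uidLe_iff.1 hri).resolve_left fun h => hir (h ▸ .refl)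
      have hcb : Created J Su b ⟨R, i⟩ := hr'.created_iff.2 <|
        (uidLe_iff.1 hr'i).resolve_left fun h => hir (h ▸ hrr'.2)
      obtain rfl : t = createdTuple a ⟨R, i⟩ := hr.eq_createdTuple hca ht hi
      exact ⟨_, hcb.fact_mem, createdTuple_self b ⟨R, i⟩, bsim_createdTuple hca hcb hab⟩

theorem uid_chase_similarity_general (htc : TransClosedUID Su) {n : ℕ} {a b : CEl σ}
    {p q : σ.Pos} (ha : IntroducedAt I Su a p) (hb : IntroducedAt J Su b q)
    (hea : essential I Su n a) (heb : essential J Su n b)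
    (hpq : AntisymmRel (UIDLe Su) p q) :
    bsim (chaseInst I Su) (chaseInst J Su) n a b :=
  bsim_of_essentialAt htc (ha.essentialAt hea hpq) (hb.essentialAt heb ⟨.refl, .refl⟩)

end Similarity

/-- **UID Chase Similarity Theorem.** Let `Su` be a transitively closed set of UIDs
and let `a`, `b` be elements introduced in the chase of `I₀` by `Su` at positions `p`
and `q` respectively. If `a` and `b` are both `n`-essential and both UIDs `p ⊆ q`
and `q ⊆ p` are in `Su`, then `a ≃_n b` in the chase. -/
theorem uid_chase_similarity
    {σ : Sig} (I₀ : Inst σ ℕ) (Su : Set (UID σ))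
    (htc : TransClosedUID Su) (n : ℕ)
    (a b : CEl σ) (p q : σ.Pos)
    (ha : IntroducedAt I₀ Su a p) (hb : IntroducedAt I₀ Su b q)
    (hea : essential I₀ Su n a) (heb : essential I₀ Su n b)
    (hpq : p ≠ q)
    (h1 : (⟨p, q, hpq⟩ : UID σ) ∈ Su)
    (h2 : (⟨q, p, hpq.symm⟩ : UID σ) ∈ Su) :
    bsim (chaseInst I₀ Su) (chaseInst I₀ Su) n a b ∧
    bsim (chaseInst I₀ Su) (chaseInst I₀ Su) n b a := by
  have hequiv : AntisymmRel (UIDLe Su) p q := ⟨.of_mem h1, .of_mem h2⟩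
  exact ⟨uid_chase_similarity_general htc ha hb hea heb hequiv,
    uid_chase_similarity_general htc hb ha heb hea hequiv.symm⟩

end FQA
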